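/- Discrete coercivity estimate (Step 1 of the proof of Lemma 3.6 of the paper): assume Assumption H. There exists a set Ω₀ ∈ ℱ with ℙ(Ω₀) = 1 such that for every ω ∈ Ω₀, every half-open axis-parallel box A ⊂ ℝ^d and every family (u_ε)_{ε>0} of functions u_ε : εℤ^d → ℝⁿ with E* := limsup_{ε↓0} E_ε(ω;u_ε,A) < ∞, one has limsup_{ε↓0} ε^d Σ_{z∈εℤ^d∩A} Σ_{b∈𝒩₀} |∂_b^ε u_ε(z)|^{pβ/(β+1)} ≤ (c₁ E* + c₁² |A| Σ_{b∈𝒩₀} E[λ_b])^{β/(β+1)} · (|A| Σ_{b∈𝒩₀} E[λ_b^{−β}])^{1/(β+1)}; in particular this limsup is finite. -/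

import Mathlib

/-!
On the nearest-neighbour edges, Hölder's inequality with weight `λ^{-β}` bounds the Riemann sum of
`|∂u|^{pβ/(β+1)}` by the `β/(β+1)`-th power of the Riemann sum of `λ |∂u|^p` times the
`1/(β+1)`-th power of that of `λ^{-β}`. The lower growth bound controls `λ |∂u|^p` by
`c V + c² λ`, so it remains to identify the limits of the Riemann sums of `λ` and `λ^{-β}` along an
orbit. These are given by an ergodic theorem that holds for all boxes simultaneously off a single
null set. It is immediate for bounded coboundaries, whose Riemann sums telescope up to a boundary
layer; coboundaries and constants span a dense subspace of `L²`, and a weak-type maximal inequality,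
obtained from Vitali's covering lemma and transference to the lattice, carries the convergence over
to all of `L¹`.
-/

open MeasureTheory Filter Metric Set
open scoped Classical
open scoped ENNReal Topology Pointwise

noncomputable section

namespace StochHom

/-- `ℝ^d` with the Euclidean norm. -/
abbrev Rd (d : ℕ) : Type := EuclideanSpace ℝ (Fin d)

/-- `ℝ^n` with the Euclidean norm. -/
abbrev Rn (n : ℕ) : Type := EuclideanSpace ℝ (Fin n)

/-- The lattice `ℤ^d`. -/
abbrev Zd (d : ℕ) : Type := Fin d → ℤ

variable {d n : ℕ}

/-- The embedding of the lattice `ℤ^d` into `ℝ^d`. -/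
def toRd (z : Zd d) : Rd d := (EuclideanSpace.equiv (Fin d) ℝ).symm fun i => (z i : ℝ)

/-- The standard basis vectors `eᵢ` of `ℤ^d`. -/
def stdb (i : Fin d) : Zd d := fun j => if j = i then 1 else 0

/-- The interaction range `R = max {4√d, max_{b ∈ ℰ₀} |b|}`. -/
def irange (d : ℕ) (E0 : Finset (Zd d)) : ℝ :=
  max (4 * Real.sqrt d) (sSup ((fun b : Zd d => ‖toRd b‖) '' (E0 : Set (Zd d))))

variable {Ω : Type*} [MeasurableSpace Ω]

/-- The energy `E₁(ω; u, ℤ^d ∩ A)`. -/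
def energy1 (τ : Zd d → Ω → Ω) (E0 : Finset (Zd d)) (V : Zd d → Ω → Rn n → ℝ)
    (ω : Ω) (u : Zd d → Rn n) (A : Set (Rd d)) : ℝ :=
  ∑' z : Zd d, if toRd z ∈ A then
      ∑ b ∈ E0, V b (τ z ω) ((‖toRd b‖)⁻¹ • (u (z + b) - u z)) else 0

/-- The scaled energy `E_ε(ω; u, A)`, where a function `u : εℤ^d → ℝ^n` is identified with a
function on `ℤ^d` via `z ↦ u(εz)`, so that `∂_b^ε u (z) = (u (z+b) - u z)/(ε |b|)`. -/
def energyE (τ : Zd d → Ω → Ω) (E0 : Finset (Zd d)) (V : Zd d → Ω → Rn n → ℝ)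
    (ε : ℝ) (ω : Ω) (u : Zd d → Rn n) (A : Set (Rd d)) : ℝ :=
  ε ^ d * ∑' z : Zd d, if ε • toRd z ∈ A then
      ∑ b ∈ E0, V b (τ z ω) ((ε * ‖toRd b‖)⁻¹ • (u (z + b) - u z)) else 0

/-- The localized minimal energy `m_F(ω; A)`. -/
def mF (τ : Zd d → Ω → Ω) (E0 : Finset (Zd d)) (V : Zd d → Ω → Rn n → ℝ)
    (ω : Ω) (F : Rd d →L[ℝ] Rn n) (A : Set (Rd d)) : ℝ :=
  ⨅ φ : {φ : Zd d → Rn n // ∀ z : Zd d, infDist (toRd z) Aᶜ ≤ irange d E0 → φ z = 0},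
    energy1 τ E0 V ω (fun z => F (toRd z) + φ.1 z) A

/-- The half-open cube `[0,k)^d ⊂ ℝ^d`. -/
def cube (d k : ℕ) : Set (Rd d) := {x | ∀ i, 0 ≤ x i ∧ x i < (k : ℝ)}

/-- The homogenized energy density `W₀(F) = inf_{k ≥ 1} k⁻ᵈ E[m_F(·, [0,k)^d)]`. -/
def W0 (P : Measure Ω) (τ : Zd d → Ω → Ω) (E0 : Finset (Zd d))
    (V : Zd d → Ω → Rn n → ℝ) (F : Rd d →L[ℝ] Rn n) : ℝ :=
  ⨅ k : {k : ℕ // 0 < k}, (((k : ℕ) : ℝ) ^ d)⁻¹ * ∫ ω, mF τ E0 V ω F (cube d k) ∂P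

/-- Half-open axis-parallel box `Π_i [aᵢ, bᵢ)`. -/
def halfBox (a b : Fin d → ℝ) : Set (Rd d) := {x | ∀ i, a i ≤ x i ∧ x i < b i}

/-- Open axis-parallel box `Π_i (aᵢ, bᵢ)`. -/
def openBox (a b : Fin d → ℝ) : Set (Rd d) := {x | ∀ i, a i < x i ∧ x i < b i}

/-- Closed axis-parallel box `Π_i [aᵢ, bᵢ]`. -/
def closedBox (a b : Fin d → ℝ) : Set (Rd d) := {x | ∀ i, a i ≤ x i ∧ x i ≤ b i}

/-- Half-open axis-parallel box with integer corners. -/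
def intBox (a b : Zd d) : Set (Rd d) := {x | ∀ i, (a i : ℝ) ≤ x i ∧ x i < (b i : ℝ)}

/-- The periodic cell minimization `W^{(k)}(ω; F)`. -/
def Wper (τ : Zd d → Ω → Ω) (E0 : Finset (Zd d)) (V : Zd d → Ω → Rn n → ℝ)
    (k : ℕ) (ω : Ω) (F : Rd d →L[ℝ] Rn n) : ℝ :=
  ⨅ φ : {φ : Zd d → Rn n // ∀ z z' : Zd d, φ (z + k • z') = φ z},
    ((k : ℝ) ^ d)⁻¹ * energy1 τ E0 V ω (fun z => F (toRd z) + φ.1 z) (cube d k)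

section MaximalInequality

/-- The ball of radius `N` about `z` in `ℤ^d`, for the sup norm. -/
def latticeBall (z : Zd d) (N : ℕ) : Finset (Zd d) :=
  Finset.Icc (z - fun _ => (N : ℤ)) (z + fun _ => (N : ℤ))

lemma coe_latticeBall (z : Zd d) (N : ℕ) : (latticeBall z N : Set (Zd d)) = closedBall z N := by
  rw [latticeBall, Finset.coe_Icc, ← pi_univ_Icc, closedBall_pi z N.cast_nonneg]
  refine congrArg _ (funext fun i => ?_)
  simp only [Pi.sub_apply, Pi.add_apply, Int.closedBall_eq_Icc]
  norm_cast
  simp only [Int.ceil_intCast, Int.floor_intCast]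

lemma mem_latticeBall {z w : Zd d} {N : ℕ} : w ∈ latticeBall z N ↔ dist w z ≤ N := by
  rw [← Finset.mem_coe, coe_latticeBall, mem_closedBall]

lemma latticeBall_subset_latticeBall {z w : Zd d} {M N : ℕ} (h : dist z w + M ≤ N) :
    latticeBall z M ⊆ latticeBall w N := by
  rw [← Finset.coe_subset, coe_latticeBall, coe_latticeBall]
  exact closedBall_subset_closedBall' (by linarith)

lemma card_latticeBall (z : Zd d) (N : ℕ) : (latticeBall z N).card = (2 * N + 1) ^ d := by
  rw [latticeBall, Pi.card_Icc, Finset.prod_congr rfl (g := fun _ => 2 * N + 1)]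
  · rw [Finset.prod_const, Finset.card_univ, Fintype.card_fin]
  · intro i _
    simp only [Pi.sub_apply, Pi.add_apply, Int.card_Icc]
    lia

lemma card_latticeBall_ne_zero (z : Zd d) (N : ℕ) : ((latticeBall z N).card : ℝ≥0∞) ≠ 0 := by
  rw [card_latticeBall]
  positivity

lemma card_latticeBall_mul_le (z : Zd d) {k : ℕ} (hk : 1 ≤ k) (N : ℕ) :
    (latticeBall z (k * N)).card ≤ k ^ d * (latticeBall z N).card := by
  rw [card_latticeBall, card_latticeBall, ← mul_pow]
  exact Nat.pow_le_pow_left (by nlinarith) d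

lemma map_addRight_latticeBall (z w : Zd d) (N : ℕ) :
    (latticeBall z N).map (addRightEmbedding w) = latticeBall (z + w) N := by
  rw [latticeBall, Finset.map_add_right_Icc, latticeBall, sub_add_eq_add_sub, add_right_comm]

/-- The average of `F` over the ball of radius `N` about `z`. -/
def ballAverage (F : Zd d → ℝ≥0∞) (z : Zd d) (N : ℕ) : ℝ≥0∞ :=
  (∑ w ∈ latticeBall z N, F w) / (latticeBall z N).card

lemma le_ballAverage_iff {F : Zd d → ℝ≥0∞} {z : Zd d} {N : ℕ} {l : ℝ≥0∞} :
    l ≤ ballAverage F z N ↔ l * (latticeBall z N).card ≤ ∑ w ∈ latticeBall z N, F w :=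
  ENNReal.le_div_iff_mul_le (.inl (card_latticeBall_ne_zero z N)) (.inl (ENNReal.natCast_ne_top _))

lemma ballAverage_comp_add_right (F : Zd d → ℝ≥0∞) (z w : Zd d) (N : ℕ) :
    ballAverage (fun v => F (v + w)) z N = ballAverage F (z + w) N := by
  rw [ballAverage, ballAverage, ← map_addRight_latticeBall, Finset.sum_map, Finset.card_map]
  rfl

lemma exists_disjoint_latticeBall_subfamily (S : Finset (Zd d)) (N : Zd d → ℕ) :
    ∃ U ⊆ S, (U : Set (Zd d)).PairwiseDisjoint (fun z => latticeBall z (N z)) ∧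
      S ⊆ U.biUnion fun z => latticeBall z (5 * N z) := by
  obtain ⟨U, hUS, hdisj, hcov⟩ := Vitali.exists_disjoint_subfamily_covering_enlargement_closedBall
    (S : Set (Zd d)) id (fun z => (N z : ℝ)) (∑ z ∈ S, N z : ℕ)
    (fun z hz => by exact_mod_cast Finset.single_le_sum (fun _ _ => Nat.zero_le _) hz)
    5 (by norm_num)
  lift U to Finset (Zd d) using S.finite_toSet.subset hUS
  refine ⟨U, Finset.coe_subset.1 hUS, fun x hx y hy hxy => ?_, fun z hz => ?_⟩
  · rw [Function.onFun, ← Finset.disjoint_coe, coe_latticeBall, coe_latticeBall]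
    exact hdisj hx hy hxy
  · obtain ⟨w, hw, hzw⟩ := hcov z hz
    refine Finset.mem_biUnion.2 ⟨w, hw, ?_⟩
    rw [← Finset.mem_coe, coe_latticeBall, Nat.cast_mul]
    exact hzw (mem_closedBall_self (N z).cast_nonneg)

lemma mul_card_le_of_le_ballAverage {F : Zd d → ℝ≥0∞} {l : ℝ≥0∞} {S T : Finset (Zd d)}
    (h : ∀ z ∈ S, ∃ N, latticeBall z N ⊆ T ∧ l ≤ ballAverage F z N) :
    l * S.card ≤ 5 ^ d * ∑ w ∈ T, F w := by
  choose! N hNT hl using h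
  obtain ⟨U, hUS, hdisj, hcov⟩ := exists_disjoint_latticeBall_subfamily S N
  have hcard : S.card ≤ 5 ^ d * ∑ z ∈ U, (latticeBall z (N z)).card := by
    rw [Finset.mul_sum]
    exact (Finset.card_le_card hcov).trans (Finset.card_biUnion_le.trans
      (Finset.sum_le_sum fun z _ => card_latticeBall_mul_le z (by norm_num) (N z)))
  calc l * S.card
      ≤ l * (5 ^ d * ∑ z ∈ U, (latticeBall z (N z)).card : ℕ) := by gcongr
    _ = 5 ^ d * ∑ z ∈ U, l * (latticeBall z (N z)).card := by
        push_cast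
        rw [mul_left_comm, Finset.mul_sum]
    _ ≤ 5 ^ d * ∑ z ∈ U, ∑ w ∈ latticeBall z (N z), F w := by
        gcongr with z hz
        exact le_ballAverage_iff.1 (hl z (hUS hz))
    _ = 5 ^ d * ∑ w ∈ U.biUnion fun z => latticeBall z (N z), F w := by
        rw [Finset.sum_biUnion hdisj]
    _ ≤ 5 ^ d * ∑ w ∈ T, F w := by
        gcongr
        exact Finset.biUnion_subset.2 fun z hz => hNT z (hUS hz)

section Orbit

variable {X : Type*} [AddAction (Zd d) X]

/-- The ergodic maximal function: the supremum of the averages of `f` over the part of the orbit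
of `ω` that is parametrized by a ball about `0`. -/
def ergodicMaximal (d : ℕ) [AddAction (Zd d) X] (f : X → ℝ≥0∞) (ω : X) : ℝ≥0∞ :=
  ⨆ N, ballAverage (fun z : Zd d => f (z +ᵥ ω)) 0 N

lemma ballAverage_vadd (f : X → ℝ≥0∞) (z w : Zd d) (N : ℕ) (ω : X) :
    ballAverage (fun v => f (v +ᵥ (w +ᵥ ω))) z N =
      ballAverage (fun v => f (v +ᵥ ω)) (z + w) N := by
  simp only [vadd_vadd]
  exact ballAverage_comp_add_right (fun v => f (v +ᵥ ω)) z w N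

lemma mul_card_orbit_le {f : X → ℝ≥0∞} {l : ℝ≥0∞} {E : Set X} {R : ℕ}
    (hE : ∀ ω ∈ E, ∃ N ≤ R, l ≤ ballAverage (fun z : Zd d => f (z +ᵥ ω)) 0 N) (ω : X) :
    l * ((latticeBall (0 : Zd d) R).filter fun z => z +ᵥ ω ∈ E).card ≤
      5 ^ d * ∑ w ∈ latticeBall (0 : Zd d) (2 * R), f (w +ᵥ ω) := by
  refine mul_card_le_of_le_ballAverage fun z hz => ?_
  obtain ⟨hzR, hzE⟩ := Finset.mem_filter.1 hz
  obtain ⟨N, hNR, hl⟩ := hE _ hzE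
  refine ⟨N, latticeBall_subset_latticeBall ?_, by rwa [ballAverage_vadd, zero_add] at hl⟩
  have hzR : dist z 0 ≤ R := mem_latticeBall.1 hzR
  have hNR : (N : ℝ) ≤ R := Nat.cast_le.2 hNR
  push_cast
  linarith

end Orbit

variable [AddAction (Zd d) Ω] [MeasurableConstVAdd (Zd d) Ω]

lemma measurable_sum_vadd {f : Ω → ℝ≥0∞} (hf : Measurable f) (S : Finset (Zd d)) :
    Measurable fun ω => ∑ z ∈ S, f (z +ᵥ ω) :=
  Finset.measurable_sum _ fun z _ => hf.comp (measurable_const_vadd z)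

lemma measurable_ballAverage_vadd {f : Ω → ℝ≥0∞} (hf : Measurable f) (z : Zd d) (N : ℕ) :
    Measurable fun ω => ballAverage (fun w => f (w +ᵥ ω)) z N :=
  (measurable_sum_vadd hf _).div_const _

variable {μ : Measure Ω} [VAddInvariantMeasure (Zd d) Ω μ]

lemma lintegral_sum_vadd {f : Ω → ℝ≥0∞} (hf : Measurable f) (S : Finset (Zd d)) :
    ∫⁻ ω, ∑ z ∈ S, f (z +ᵥ ω) ∂μ = S.card * ∫⁻ ω, f ω ∂μ := by
  calc ∫⁻ ω, ∑ z ∈ S, f (z +ᵥ ω) ∂μ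
      = ∑ z ∈ S, ∫⁻ ω, f (z +ᵥ ω) ∂μ :=
        lintegral_finsetSum _ fun z _ => hf.comp (measurable_const_vadd z)
    _ = ∑ _z ∈ S, ∫⁻ ω, f ω ∂μ :=
        Finset.sum_congr rfl fun z _ => (measurePreserving_vadd z μ).lintegral_comp hf
    _ = S.card * ∫⁻ ω, f ω ∂μ := by rw [Finset.sum_const, nsmul_eq_mul]

/- Transference: along the orbit of `ω` the bound is the covering estimate on `ℤ^d`, and
integrating in `ω` turns the two orbit sums into `|B_R| μ E` and `|B_{2R}| ∫ f`. -/
lemma mul_measure_le_of_le_ballAverage {f : Ω → ℝ≥0∞} (hf : Measurable f) {l : ℝ≥0∞}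
    {E : Set Ω} (hE : MeasurableSet E) {R : ℕ}
    (h : ∀ ω ∈ E, ∃ N ≤ R, l ≤ ballAverage (fun z : Zd d => f (z +ᵥ ω)) 0 N) :
    l * μ E ≤ 10 ^ d * ∫⁻ ω, f ω ∂μ := by
  set B := latticeBall (0 : Zd d) R
  have hE1 : Measurable (E.indicator (1 : Ω → ℝ≥0∞)) := measurable_one.indicator hE
  have horbit : ∀ ω, l * ∑ z ∈ B, E.indicator (1 : Ω → ℝ≥0∞) (z +ᵥ ω) ≤
      (5 : ℝ≥0∞) ^ d * ∑ w ∈ latticeBall (0 : Zd d) (2 * R), f (w +ᵥ ω) := fun ω => by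
    simpa only [indicator_apply, Pi.one_apply, Finset.sum_boole] using mul_card_orbit_le h ω
  have hcard : ((latticeBall (0 : Zd d) (2 * R)).card : ℝ≥0∞) ≤ 2 ^ d * B.card := by
    exact_mod_cast card_latticeBall_mul_le 0 (by norm_num) R
  refine (ENNReal.mul_le_mul_iff_right (card_latticeBall_ne_zero (0 : Zd d) R)
    (ENNReal.natCast_ne_top _)).1 ?_
  calc B.card * (l * μ E)
      = ∫⁻ ω, l * ∑ z ∈ B, E.indicator (1 : Ω → ℝ≥0∞) (z +ᵥ ω) ∂μ := by
        rw [lintegral_const_mul _ (measurable_sum_vadd hE1 B), lintegral_sum_vadd hE1,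
          lintegral_indicator_one hE, mul_left_comm]
    _ ≤ ∫⁻ ω, 5 ^ d * ∑ w ∈ latticeBall (0 : Zd d) (2 * R), f (w +ᵥ ω) ∂μ :=
        lintegral_mono horbit
    _ = 5 ^ d * ((latticeBall (0 : Zd d) (2 * R)).card * ∫⁻ ω, f ω ∂μ) := by
        rw [lintegral_const_mul _ (measurable_sum_vadd hf _), lintegral_sum_vadd hf]
    _ ≤ 5 ^ d * (2 ^ d * B.card * ∫⁻ ω, f ω ∂μ) := by gcongr
    _ = B.card * (10 ^ d * ∫⁻ ω, f ω ∂μ) := by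
        rw [show (10 : ℝ≥0∞) = 5 * 2 by norm_num, mul_pow]
        ring

lemma mul_measure_lt_ergodicMaximal_le_of_measurable {f : Ω → ℝ≥0∞} (hf : Measurable f)
    (l : ℝ≥0∞) : l * μ {ω | l < ergodicMaximal d f ω} ≤ 10 ^ d * ∫⁻ ω, f ω ∂μ := by
  let E (R : ℕ) : Set Ω :=
    ⋃ N ≤ R, {ω | l ≤ ballAverage (fun z : Zd d => f (z +ᵥ ω)) 0 N}
  have hE : ∀ R, MeasurableSet (E R) := fun R => .biUnion (to_countable _) fun N _ =>
    measurableSet_le measurable_const (measurable_ballAverage_vadd hf 0 N)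
  have hEmono : Monotone E := fun R R' h =>
    biUnion_mono (fun N hN => le_trans hN h) fun _ _ => subset_rfl
  have hsub : {ω | l < ergodicMaximal d f ω} ⊆ ⋃ R, E R := fun ω hω => by
    obtain ⟨N, hN⟩ := lt_iSup_iff.1 (mem_ofPred_eq ▸ hω)
    exact mem_iUnion.2 ⟨N, mem_iUnion₂.2 ⟨N, le_rfl, hN.le⟩⟩
  calc l * μ {ω | l < ergodicMaximal d f ω}
      ≤ l * μ (⋃ R, E R) := by gcongr
    _ = ⨆ R, l * μ (E R) := by rw [hEmono.measure_iUnion, ENNReal.mul_iSup]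
    _ ≤ 10 ^ d * ∫⁻ ω, f ω ∂μ := iSup_le fun R =>
        mul_measure_le_of_le_ballAverage hf (hE R) fun ω hω => by
          simpa only [E, mem_iUnion, exists_prop, mem_ofPred_eq] using hω

variable (d) in
lemma ergodicMaximal_congr_ae {f g : Ω → ℝ≥0∞} (h : f =ᵐ[μ] g) :
    ergodicMaximal d f =ᵐ[μ] ergodicMaximal d g := by
  have horbit : ∀ᵐ ω ∂μ, ∀ z : Zd d, f (z +ᵥ ω) = g (z +ᵥ ω) :=
    ae_all_iff.2 fun z => (measurePreserving_vadd z μ).quasiMeasurePreserving.ae_eq_comp h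
  filter_upwards [horbit] with ω hω
  simp only [ergodicMaximal, hω]

/-- The weak type (1,1) inequality for the ergodic maximal function. -/
lemma mul_measure_lt_ergodicMaximal_le {f : Ω → ℝ≥0∞} (hf : AEMeasurable f μ) (l : ℝ≥0∞) :
    l * μ {ω | l < ergodicMaximal d f ω} ≤ 10 ^ d * ∫⁻ ω, f ω ∂μ := by
  have hset : {ω | l < ergodicMaximal d f ω} =ᵐ[μ] {ω | l < ergodicMaximal d (hf.mk f) ω} := by
    filter_upwards [ergodicMaximal_congr_ae d hf.ae_eq_mk] with ω hω
    exact congrArg (l < ·) hω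
  rw [measure_congr hset, lintegral_congr_ae hf.ae_eq_mk]
  exact mul_measure_lt_ergodicMaximal_le_of_measurable hf.measurable_mk l

lemma ae_frequently_ergodicMaximal_le {f : ℕ → Ω → ℝ≥0∞} (hf : ∀ k, AEMeasurable (f k) μ)
    (hlim : Tendsto (fun k => ∫⁻ ω, f k ω ∂μ) atTop (𝓝 0)) {l : ℝ≥0∞} (hl : l ≠ 0) :
    ∀ᵐ ω ∂μ, ∃ᶠ k in atTop, ergodicMaximal d (f k) ω ≤ l := by
  simp only [frequently_atTop]
  refine ae_all_iff.2 fun K => ?_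
  have hle : l * μ {ω | ¬∃ k ≥ K, ergodicMaximal d (f k) ω ≤ l} ≤ 10 ^ d * 0 := by
    refine ge_of_tendsto (ENNReal.Tendsto.const_mul hlim (.inr (by finiteness))) ?_
    filter_upwards [eventually_ge_atTop K] with k hk
    refine le_trans ?_ (mul_measure_lt_ergodicMaximal_le (d := d) (hf k) l)
    gcongr
    exact fun hω => not_le.1 fun h => hω ⟨k, hk, h⟩
  exact (mul_eq_zero.1 (nonpos_iff_eq_zero.1 (hle.trans_eq (mul_zero _)))).resolve_left hl

end MaximalInequality

section ScaledBoxes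

lemma volume_real_halfBox (a b : Fin d → ℝ) :
    volume.real (halfBox a b) = ∏ i, max (b i - a i) 0 := by
  have hpre : halfBox a b = (MeasurableEquiv.toLp 2 (Fin d → ℝ)).symm ⁻¹'
      univ.pi fun i => Ico (a i) (b i) := by
    ext x
    simp [halfBox, Set.mem_pi]
  rw [measureReal_def, hpre,
    (EuclideanSpace.volume_preserving_symm_measurableEquiv_toLp (Fin d)).measure_preimage
      (MeasurableSet.univ_pi fun i => measurableSet_Ico).nullMeasurableSet,
    Real.volume_pi_Ico, ENNReal.toReal_prod]
  simp only [ENNReal.toReal_ofReal']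

/-- The lattice points `z` for which `ε z` lies in the box `Π_i [aᵢ, bᵢ)`, for `ε > 0`. -/
def latticeBox (a b : Fin d → ℝ) (ε : ℝ) : Finset (Zd d) :=
  Fintype.piFinset fun i => Finset.Ico ⌈a i / ε⌉ ⌈b i / ε⌉

lemma mem_latticeBox {a b : Fin d → ℝ} {ε : ℝ} (hε : 0 < ε) {z : Zd d} :
    z ∈ latticeBox a b ε ↔ ∀ i, a i ≤ ε * z i ∧ ε * z i < b i := by
  simp only [latticeBox, Fintype.mem_piFinset, Finset.mem_Ico, Int.ceil_le, Int.lt_ceil,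
    div_le_iff₀' hε, lt_div_iff₀' hε]

lemma smul_toRd_mem_halfBox {a b : Fin d → ℝ} {ε : ℝ} (hε : 0 < ε) {z : Zd d} :
    ε • toRd z ∈ halfBox a b ↔ z ∈ latticeBox a b ε := by
  rw [mem_latticeBox hε]
  rfl

/-- The Riemann sum `ε^d ∑_{z ∈ ℤ^d, ε z ∈ A} F z` over the box `A = Π_i [aᵢ, bᵢ)`, as a linear
functional of `F`. -/
def riemannSum (a b : Fin d → ℝ) (ε : ℝ) : (Zd d → ℝ) →ₗ[ℝ] ℝ :=
  ε ^ d • ∑ z ∈ latticeBox a b ε, LinearMap.proj z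

lemma riemannSum_apply (a b : Fin d → ℝ) (ε : ℝ) (F : Zd d → ℝ) :
    riemannSum a b ε F = ε ^ d * ∑ z ∈ latticeBox a b ε, F z := by
  simp only [riemannSum, LinearMap.smul_apply, LinearMap.sum_apply, LinearMap.proj_apply,
    smul_eq_mul]

lemma pow_mul_tsum_halfBox_eq_riemannSum (a b : Fin d → ℝ) {ε : ℝ} (hε : 0 < ε)
    (F : Zd d → ℝ) :
    (ε ^ d * ∑' z : Zd d, if ε • toRd z ∈ halfBox a b then F z else 0) = riemannSum a b ε F := by
  simp only [smul_toRd_mem_halfBox hε, riemannSum_apply]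
  rw [tsum_eq_sum (s := latticeBox a b ε) fun z hz => if_neg hz]
  exact congrArg _ (Finset.sum_congr rfl fun z hz => if_pos hz)

lemma riemannSum_mono (a b : Fin d → ℝ) {ε : ℝ} (hε : 0 ≤ ε) {F G : Zd d → ℝ} (h : F ≤ G) :
    riemannSum a b ε F ≤ riemannSum a b ε G := by
  rw [riemannSum_apply, riemannSum_apply]
  gcongr with z
  exact h z

lemma tendsto_mul_ceil_div (x : ℝ) :
    Tendsto (fun ε : ℝ => ε * (⌈x / ε⌉ : ℝ)) (𝓝[>] 0) (𝓝 x) := by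
  have hupper : Tendsto (fun ε : ℝ => x + ε) (𝓝[>] 0) (𝓝 x) :=
    ((continuous_const_add x).tendsto' 0 x (add_zero x)).mono_left nhdsWithin_le_nhds
  refine tendsto_of_tendsto_of_tendsto_of_le_of_le' tendsto_const_nhds hupper ?_ ?_ <;>
    filter_upwards [self_mem_nhdsWithin] with ε (hε : 0 < ε)
  · exact (div_le_iff₀' hε).1 (Int.le_ceil _)
  · calc ε * ⌈x / ε⌉ ≤ ε * (x / ε + 1) := by gcongr; exact (Int.ceil_lt_add_one _).le
      _ = x + ε := by field_simp

lemma tendsto_pow_mul_card_piFinset_Ico {a b : Fin d → ℝ} {L U : ℝ → Fin d → ℤ}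
    (hL : ∀ i, Tendsto (fun ε => ε * (L ε i : ℝ)) (𝓝[>] 0) (𝓝 (a i)))
    (hU : ∀ i, Tendsto (fun ε => ε * (U ε i : ℝ)) (𝓝[>] 0) (𝓝 (b i))) :
    Tendsto (fun ε : ℝ =>
      ε ^ d * ((Fintype.piFinset fun i => Finset.Ico (L ε i) (U ε i)).card : ℝ)) (𝓝[>] 0)
      (𝓝 (volume.real (halfBox a b))) := by
  rw [volume_real_halfBox]
  refine (tendsto_finsetProd _ fun i _ =>
    ((hU i).sub (hL i)).max (tendsto_const_nhds (x := 0))).congr' ?_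
  filter_upwards [self_mem_nhdsWithin] with ε (hε : 0 < ε)
  have hcard (k l : ℤ) : ((Finset.Ico k l).card : ℝ) = max ((l : ℝ) - k) 0 := by
    rw [Int.card_Ico]
    exact_mod_cast Int.toNat_eq_max (l - k)
  rw [Fintype.card_piFinset, Nat.cast_prod, ← Fin.prod_const, ← Finset.prod_mul_distrib]
  simp only [hcard, mul_max_of_nonneg _ _ hε.le, mul_sub, mul_zero]

lemma tendsto_pow_mul_card_latticeBox (a b : Fin d → ℝ) :
    Tendsto (fun ε : ℝ => ε ^ d * ((latticeBox a b ε).card : ℝ)) (𝓝[>] 0)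
      (𝓝 (volume.real (halfBox a b))) :=
  tendsto_pow_mul_card_piFinset_Ico (fun i => tendsto_mul_ceil_div (a i))
    fun i => tendsto_mul_ceil_div (b i)

lemma tendsto_riemannSum_const (a b : Fin d → ℝ) (c : ℝ) :
    Tendsto (fun ε => riemannSum a b ε fun _ => c) (𝓝[>] 0)
      (𝓝 (volume.real (halfBox a b) * c)) := by
  simpa only [riemannSum_apply, Finset.sum_const, nsmul_eq_mul, mul_assoc] using
    (tendsto_pow_mul_card_latticeBox a b).mul_const c

lemma latticeBox_inter_map_addRight (a b : Fin d → ℝ) (ε : ℝ) (w : Zd d) :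
    latticeBox a b ε ∩ (latticeBox a b ε).map (Equiv.addRight w).toEmbedding =
      Fintype.piFinset fun i => Finset.Ico (max ⌈a i / ε⌉ (⌈a i / ε⌉ + w i))
        (min ⌈b i / ε⌉ (⌈b i / ε⌉ + w i)) := by
  simp only [← Finset.Ico_inter_Ico, Fintype.piFinset_inter, latticeBox]
  congr 1
  ext z
  simp only [Finset.mem_map_equiv, Equiv.addRight_symm, Equiv.coe_addRight, Fintype.mem_piFinset,
    Finset.mem_Ico, Pi.add_apply, Pi.neg_apply, le_add_neg_iff_add_le, add_neg_lt_iff_lt_add]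

lemma tendsto_pow_mul_card_latticeBox_inter (a b : Fin d → ℝ) (w : Zd d) :
    Tendsto (fun ε : ℝ => ε ^ d *
      ((latticeBox a b ε ∩ (latticeBox a b ε).map (Equiv.addRight w).toEmbedding).card : ℝ))
      (𝓝[>] 0) (𝓝 (volume.real (halfBox a b))) := by
  have hshift (x : ℝ) (k : ℤ) :
      Tendsto (fun ε : ℝ => ε * ((⌈x / ε⌉ + k : ℤ) : ℝ)) (𝓝[>] 0) (𝓝 x) := by
    have hk : Tendsto (fun ε : ℝ => ε * (k : ℝ)) (𝓝[>] 0) (𝓝 0) :=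
      ((continuous_mul_const (k : ℝ)).tendsto' 0 0 (zero_mul _)).mono_left nhdsWithin_le_nhds
    simpa only [Int.cast_add, mul_add, add_zero] using (tendsto_mul_ceil_div x).add hk
  simp only [latticeBox_inter_map_addRight]
  refine tendsto_pow_mul_card_piFinset_Ico (fun i => ?_) fun i => ?_
  · refine (max_self (a i) ▸ (tendsto_mul_ceil_div (a i)).max (hshift (a i) (w i))).congr' ?_
    filter_upwards [self_mem_nhdsWithin] with ε (hε : 0 < ε)
    rw [← mul_max_of_nonneg _ _ hε.le, Int.cast_max]
  · refine (min_self (b i) ▸ (tendsto_mul_ceil_div (b i)).min (hshift (b i) (w i))).congr' ?_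
    filter_upwards [self_mem_nhdsWithin] with ε (hε : 0 < ε)
    rw [← mul_min_of_nonneg _ _ hε.le, Int.cast_min]

lemma abs_sum_sub_sum_le_of_card_eq {ι : Type*} [DecidableEq ι] {G : ι → ℝ} {C : ℝ}
    (hG : ∀ z, |G z| ≤ C) {S T : Finset ι} (h : T.card = S.card) :
    |∑ z ∈ S, G z - ∑ z ∈ T, G z| ≤ 2 * C * (S.card - (S ∩ T).card) := by
  have hsum (R : Finset ι) : |∑ z ∈ R, G z| ≤ C * R.card := by
    simpa only [nsmul_eq_mul, mul_comm] using
      (Finset.abs_sum_le_sum_abs G R).trans (Finset.sum_le_card_nsmul R _ C fun z _ => hG z)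
  have hST : ((S \ T).card : ℝ) = S.card - (S ∩ T).card :=
    eq_sub_of_add_eq (by exact_mod_cast Finset.card_sdiff_add_card_inter S T)
  have hTS : ((T \ S).card : ℝ) = S.card - (S ∩ T).card :=
    eq_sub_of_add_eq (by
      exact_mod_cast h ▸ Finset.inter_comm T S ▸ Finset.card_sdiff_add_card_inter T S)
  calc |∑ z ∈ S, G z - ∑ z ∈ T, G z|
      = |∑ z ∈ S \ T, G z - ∑ z ∈ T \ S, G z| := by rw [Finset.sum_sdiff_sub_sum_sdiff]
    _ ≤ C * (S \ T).card + C * (T \ S).card := (abs_sub _ _).trans (add_le_add (hsum _) (hsum _))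
    _ = 2 * C * (S.card - (S ∩ T).card) := by rw [hST, hTS]; ring

/- A box and its translate by `ε w` differ by a number of points of order `o(ε⁻ᵈ)`. -/
lemma tendsto_riemannSum_sub_shift (a b : Fin d → ℝ) (w : Zd d) {G : Zd d → ℝ} {C : ℝ}
    (hG : ∀ z, |G z| ≤ C) :
    Tendsto (fun ε => riemannSum a b ε fun z => G z - G (z + w)) (𝓝[>] 0) (𝓝 0) := by
  have hlim := ((tendsto_pow_mul_card_latticeBox a b).sub
    (tendsto_pow_mul_card_latticeBox_inter a b w)).const_mul (2 * C)
  rw [sub_self, mul_zero] at hlim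
  refine squeeze_zero_norm' ?_ hlim
  filter_upwards [self_mem_nhdsWithin] with ε (hε : 0 < ε)
  have hshift : ∑ z ∈ latticeBox a b ε, G (z + w) =
      ∑ z ∈ (latticeBox a b ε).map (Equiv.addRight w).toEmbedding, G z := by
    rw [Finset.sum_map]
    rfl
  rw [riemannSum_apply, Finset.sum_sub_distrib, hshift, norm_mul,
    Real.norm_of_nonneg (by positivity), Real.norm_eq_abs, ← mul_sub, mul_left_comm]
  gcongr
  exact abs_sum_sub_sum_le_of_card_eq hG (Finset.card_map _)

lemma latticeBox_subset_latticeBall (a b : Fin d → ℝ) {ε : ℝ} (hε : 0 < ε) :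
    latticeBox a b ε ⊆ latticeBall 0 ⌈max ‖a‖ ‖b‖ / ε⌉₊ := by
  intro z hz
  refine mem_latticeBall.2 ((dist_pi_le_iff (Nat.cast_nonneg _)).2 fun i => ?_)
  obtain ⟨ha, hb⟩ := (mem_latticeBox hε).1 hz i
  have hz : ε * |(z i : ℝ)| ≤ max ‖a‖ ‖b‖ := by
    calc ε * |(z i : ℝ)| = |ε * z i| := by rw [abs_mul, abs_of_pos hε]
      _ ≤ max |a i| |b i| := abs_le_max_abs_abs ha hb.le
      _ ≤ max ‖a‖ ‖b‖ := max_le_max (norm_le_pi_norm a i) (norm_le_pi_norm b i)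
  rw [Pi.zero_apply, dist_zero_right, Int.norm_eq_abs]
  exact ((le_div_iff₀' hε).2 hz).trans (Nat.le_ceil _)

lemma pow_mul_card_latticeBall_ceil_le {m ε : ℝ} (hm : 0 ≤ m) (hε : 0 < ε) (hε1 : ε ≤ 1) :
    ε ^ d * ((latticeBall (0 : Zd d) ⌈m / ε⌉₊).card : ℝ) ≤ (2 * m + 3) ^ d := by
  rw [card_latticeBall, Nat.cast_pow, ← mul_pow]
  push_cast
  gcongr
  calc ε * (2 * (⌈m / ε⌉₊ : ℝ) + 1)
      ≤ ε * (2 * (m / ε + 1) + 1) := by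
        gcongr
        exact (Nat.ceil_lt_add_one (by positivity)).le
    _ = 2 * m + 3 * ε := by field_simp; ring
    _ ≤ 2 * m + 3 := by linarith

lemma enorm_riemannSum_le (a b : Fin d → ℝ) {ε : ℝ} (hε : 0 < ε) (hε1 : ε ≤ 1)
    (F : Zd d → ℝ) :
    ‖riemannSum a b ε F‖ₑ ≤ ENNReal.ofReal ((2 * max ‖a‖ ‖b‖ + 3) ^ d) *
      ⨆ N, ballAverage (fun z => ‖F z‖ₑ) 0 N := by
  set N := ⌈max ‖a‖ ‖b‖ / ε⌉₊
  have hcard : ((latticeBall (0 : Zd d) N).card : ℝ≥0∞) ≠ 0 := card_latticeBall_ne_zero 0 N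
  calc ‖riemannSum a b ε F‖ₑ
      = ENNReal.ofReal (ε ^ d) * ‖∑ z ∈ latticeBox a b ε, F z‖ₑ := by
        rw [riemannSum_apply, enorm_mul, Real.enorm_of_nonneg (by positivity)]
    _ ≤ ENNReal.ofReal (ε ^ d) * ∑ z ∈ latticeBall 0 N, ‖F z‖ₑ := by
        gcongr
        exact (enorm_sum_le _ _).trans
          (Finset.sum_le_sum_of_subset (latticeBox_subset_latticeBall a b hε))
    _ = ENNReal.ofReal (ε ^ d * (latticeBall (0 : Zd d) N).card) *
          ballAverage (fun z => ‖F z‖ₑ) 0 N := by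
        rw [ENNReal.ofReal_mul (by positivity), ENNReal.ofReal_natCast, mul_assoc, ballAverage,
          ENNReal.mul_div_cancel hcard (ENNReal.natCast_ne_top _)]
    _ ≤ _ := by
        gcongr
        · exact pow_mul_card_latticeBall_ceil_le (by positivity) hε hε1
        · exact le_iSup (fun N => ballAverage (fun z => ‖F z‖ₑ) 0 N) N

end ScaledBoxes

section ErgodicTheorem

lemma tendsto_of_frequently_eventually_dist_le {X ι : Type*} [PseudoMetricSpace X] {l : Filter ι}
    {A : ι → X} {B : ℕ → ι → X} {J : ℕ → X} {I : X} (hB : ∀ k, Tendsto (B k) l (𝓝 (J k)))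
    (hJ : Tendsto J atTop (𝓝 I))
    (hAB : ∀ δ > 0, ∃ᶠ k in atTop, ∀ᶠ x in l, dist (A x) (B k x) ≤ δ) :
    Tendsto A l (𝓝 I) := by
  refine Metric.tendsto_nhds.2 fun δ hδ => ?_
  obtain ⟨k, hk, hkI⟩ := ((hAB (δ / 3) (by positivity)).and_eventually
    (Metric.tendsto_nhds.1 hJ (δ / 3) (by positivity))).exists
  filter_upwards [hk, Metric.tendsto_nhds.1 (hB k) (δ / 3) (by positivity)] with x hA hBx
  linarith [dist_triangle4 (A x) (B k x) (J k) I]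

lemma edist_riemannSum_vadd_le (a b : Fin d → ℝ) {ε : ℝ} (hε : 0 < ε) (hε1 : ε ≤ 1)
    {X : Type*} [AddAction (Zd d) X] (f g : X → ℝ) (ω : X) :
    edist (riemannSum a b ε fun z => f (z +ᵥ ω)) (riemannSum a b ε fun z => g (z +ᵥ ω)) ≤
      ENNReal.ofReal ((2 * max ‖a‖ ‖b‖ + 3) ^ d) * ergodicMaximal d (fun ω => ‖f ω - g ω‖ₑ) ω := by
  rw [edist_eq_enorm_sub, ← map_sub]
  exact enorm_riemannSum_le a b hε hε1 _

/-- The pointwise ergodic theorem for `f` along scaled boxes: almost surely, for every box `A`, the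
Riemann sums over `A` of the orbit `z ↦ f (z +ᵥ ω)` converge to `|A|` times the mean of `f`. -/
def BoxErgodic (d : ℕ) [AddAction (Zd d) Ω] (μ : Measure Ω) (f : Ω → ℝ) : Prop :=
  ∀ᵐ ω ∂μ, ∀ a b : Fin d → ℝ, Tendsto (fun ε => riemannSum a b ε fun z => f (z +ᵥ ω)) (𝓝[>] 0)
    (𝓝 (volume.real (halfBox a b) * ∫ ω', f ω' ∂μ))

variable [AddAction (Zd d) Ω] {μ : Measure Ω} {f g : Ω → ℝ}

variable (d) in
lemma boxErgodic_const [IsProbabilityMeasure μ] (c : ℝ) : BoxErgodic d μ fun _ => c := by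
  refine .of_forall fun ω a b => ?_
  simpa only [integral_const, probReal_univ, one_smul] using tendsto_riemannSum_const a b c

lemma BoxErgodic.add (hf : BoxErgodic d μ f) (hg : BoxErgodic d μ g) (hfi : Integrable f μ)
    (hgi : Integrable g μ) : BoxErgodic d μ (f + g) := by
  filter_upwards [hf, hg] with ω hfω hgω a b
  rw [integral_add' hfi hgi, mul_add]
  exact ((hfω a b).add (hgω a b)).congr fun ε => (map_add (riemannSum a b ε) _ _).symm

lemma BoxErgodic.const_smul (hf : BoxErgodic d μ f) (c : ℝ) : BoxErgodic d μ (c • f) := by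
  filter_upwards [hf] with ω hfω a b
  have hmean : ∫ ω, (c • f) ω ∂μ = c * ∫ ω, f ω ∂μ := integral_smul c f
  rw [hmean, mul_left_comm]
  exact ((hfω a b).const_mul c).congr fun ε => (map_smul (riemannSum a b ε) c _).symm

variable [MeasurableConstVAdd (Zd d) Ω] [VAddInvariantMeasure (Zd d) Ω μ]

lemma BoxErgodic.congr_ae (hf : BoxErgodic d μ f) (hfg : f =ᵐ[μ] g) : BoxErgodic d μ g := by
  have horbit : ∀ᵐ ω ∂μ, ∀ z : Zd d, f (z +ᵥ ω) = g (z +ᵥ ω) :=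
    ae_all_iff.2 fun z => (measurePreserving_vadd z μ).quasiMeasurePreserving.ae hfg
  filter_upwards [hf, horbit] with ω hfω hω a b
  simpa only [hω, integral_congr_ae hfg] using hfω a b

lemma boxErgodic_sub_comp_vadd {C : ℝ} (hg : ∀ ω, |g ω| ≤ C) (hgi : Integrable g μ) (w : Zd d) :
    BoxErgodic d μ fun ω => g ω - g (w +ᵥ ω) := by
  have hmean : ∫ ω, g ω - g (w +ᵥ ω) ∂μ = 0 := by
    have hgw : Integrable (fun ω => g (w +ᵥ ω)) μ :=
      (measurePreserving_vadd w μ).integrable_comp_of_integrable hgi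
    rw [integral_sub hgi hgw, integral_vadd_eq_self, sub_self]
  refine .of_forall fun ω a b => ?_
  rw [hmean, mul_zero]
  refine (tendsto_riemannSum_sub_shift a b w fun z => hg (z +ᵥ ω)).congr fun ε => ?_
  simp only [vadd_vadd, add_comm]

/- The maximal inequality makes the set of good functions closed in `L¹`. -/
lemma BoxErgodic.of_tendsto_lintegral {h : ℕ → Ω → ℝ} (hh : ∀ k, BoxErgodic d μ (h k))
    (hhi : ∀ k, Integrable (h k) μ) (hfi : Integrable f μ)
    (hlim : Tendsto (fun k => ∫⁻ ω, ‖h k ω - f ω‖ₑ ∂μ) atTop (𝓝 0)) : BoxErgodic d μ f := by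
  have hmax : ∀ᵐ ω ∂μ, ∀ m : ℕ, ∃ᶠ k in atTop,
      ergodicMaximal d (fun ω => ‖f ω - h k ω‖ₑ) ω ≤ (m : ℝ≥0∞)⁻¹ := by
    refine ae_all_iff.2 fun m => ae_frequently_ergodicMaximal_le
      (fun k => (hfi.sub (hhi k)).aestronglyMeasurable.enorm) ?_
      (ENNReal.inv_ne_zero.2 (ENNReal.natCast_ne_top m))
    simpa only [Pi.sub_apply, enorm_sub_rev (f _)] using hlim
  filter_upwards [ae_all_iff.2 hh, hmax] with ω hω hωmax a b
  refine tendsto_of_frequently_eventually_dist_le (fun k => hω k a b)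
    ((tendsto_integral_of_L1 f hfi.1 (.of_forall hhi) hlim).const_mul _) fun δ hδ => ?_
  set C := ENNReal.ofReal ((2 * max ‖a‖ ‖b‖ + 3) ^ d)
  obtain ⟨m, hm⟩ := ENNReal.exists_inv_nat_lt
    (ENNReal.div_pos (ENNReal.ofReal_pos.2 hδ).ne' (ENNReal.ofReal_ne_top : C ≠ ⊤)).ne'
  refine (hωmax m).mono fun k hk => ?_
  filter_upwards [Ioc_mem_nhdsGT zero_lt_one] with ε hε
  rw [← ENNReal.ofReal_le_ofReal_iff hδ.le, ← edist_dist]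
  calc edist (riemannSum a b ε fun z => f (z +ᵥ ω)) (riemannSum a b ε fun z => h k (z +ᵥ ω))
      ≤ C * ergodicMaximal d (fun ω => ‖f ω - h k ω‖ₑ) ω :=
        edist_riemannSum_vadd_le a b hε.1 hε.2 f (h k) ω
    _ ≤ C * (ENNReal.ofReal δ / C) := by gcongr; exact hk.trans hm.le
    _ ≤ ENNReal.ofReal δ := ENNReal.mul_div_le

variable (μ) in
/-- The Koopman isometry `f ↦ f (z +ᵥ ·)` of `L²(μ)`. -/
def koopman (z : Zd d) : Lp ℝ 2 μ →ₗᵢ[ℝ] Lp ℝ 2 μ :=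
  Lp.compMeasurePreservingₗᵢ ℝ (z +ᵥ ·) (measurePreserving_vadd z μ)

lemma coeFn_koopman (z : Zd d) (x : Lp ℝ 2 μ) : koopman μ z x =ᵐ[μ] fun ω => x (z +ᵥ ω) :=
  Lp.coeFn_compMeasurePreserving x (measurePreserving_vadd z μ)

variable [IsProbabilityMeasure μ]

variable (d μ) in
/-- The subspace of `L²(μ)` of the functions for which the pointwise ergodic theorem along scaled
boxes holds. -/
def boxErgodicSubmodule : Submodule ℝ (Lp ℝ 2 μ) where
  carrier := {x | BoxErgodic d μ x}
  zero_mem' := (boxErgodic_const d 0).congr_ae (Lp.coeFn_zero ℝ 2 μ).symm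
  add_mem' {x y} hx hy :=
    (BoxErgodic.add hx hy ((Lp.memLp x).integrable one_le_two)
      ((Lp.memLp y).integrable one_le_two)).congr_ae (Lp.coeFn_add x y).symm
  smul_mem' c x hx := (BoxErgodic.const_smul hx c).congr_ae (Lp.coeFn_smul c x).symm

lemma toLp_mem_boxErgodicSubmodule (hf : MemLp f 2 μ) :
    hf.toLp ∈ boxErgodicSubmodule d μ ↔ BoxErgodic d μ f :=
  ⟨fun h => BoxErgodic.congr_ae h hf.coeFn_toLp, fun h => h.congr_ae hf.coeFn_toLp.symm⟩

lemma isClosed_boxErgodicSubmodule : IsClosed (boxErgodicSubmodule d μ : Set (Lp ℝ 2 μ)) := by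
  refine IsSeqClosed.isClosed fun h x hh hx => ?_
  rw [Lp.tendsto_Lp_iff_tendsto_eLpNorm'] at hx
  refine BoxErgodic.of_tendsto_lintegral hh (fun k => (Lp.memLp (h k)).integrable one_le_two)
    ((Lp.memLp x).integrable one_le_two) (tendsto_of_tendsto_of_tendsto_of_le_of_le
      tendsto_const_nhds hx (fun k => zero_le) fun k => ?_)
  simp only [← Pi.sub_apply, ← eLpNorm_one_eq_lintegral_enorm]
  exact eLpNorm_le_eLpNorm_of_exponent_le one_le_two
    ((Lp.aestronglyMeasurable _).sub (Lp.aestronglyMeasurable _))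

lemma sub_koopman_mem_boxErgodicSubmodule (z : Zd d) (x : Lp ℝ 2 μ) :
    x - koopman μ z x ∈ boxErgodicSubmodule d μ := by
  have hdense : DenseRange ((↑) : Lp.simpleFunc ℝ 2 μ → Lp ℝ 2 μ) :=
    Lp.simpleFunc.denseRange ENNReal.ofNat_ne_top
  refine isClosed_property hdense
    (isClosed_boxErgodicSubmodule.preimage (continuous_id'.sub (koopman μ z).continuous))
    (fun s => ?_) x
  set g := Lp.simpleFunc.toSimpleFunc s
  have hgs : g =ᵐ[μ] (s : Lp ℝ 2 μ) := Lp.simpleFunc.toSimpleFunc_eq_toFun s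
  obtain ⟨C, hC⟩ := g.exists_forall_norm_le
  refine (boxErgodic_sub_comp_vadd hC (SimpleFunc.integrable_of_isFiniteMeasure g) z).congr_ae ?_
  change _ =ᵐ[μ] ((s : Lp ℝ 2 μ) - koopman μ z s : Lp ℝ 2 μ)
  filter_upwards [hgs, Lp.coeFn_sub (s : Lp ℝ 2 μ) (koopman μ z s), coeFn_koopman z (s : Lp ℝ 2 μ),
    (measurePreserving_vadd z μ).quasiMeasurePreserving.ae hgs] with ω hω hsub hkoop hzω
  rw [hsub, Pi.sub_apply, hkoop, hω, hzω]

end ErgodicTheorem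

section ErgodicAction

variable [AddAction (Zd d) Ω] [MeasurableConstVAdd (Zd d) Ω] {μ : Measure Ω}
  [ErgodicVAdd (Zd d) Ω μ]

lemma exists_ae_eq_const_of_forall_koopman_eq {x : Lp ℝ 2 μ}
    (hx : ∀ z : Zd d, koopman μ z x = x) : ∃ c, x =ᵐ[μ] fun _ => c := by
  refine exists_eventuallyEq_const_of_forall_separating MeasurableSet fun U hU => ?_
  have hconst : EventuallyConst (x ⁻¹' U) (ae μ) :=
    aeconst_of_forall_preimage_vadd_ae_eq (Zd d)
      ((Lp.stronglyMeasurable x).measurable hU).nullMeasurableSet fun z => by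
        filter_upwards [coeFn_koopman z x] with ω hω
        rw [hx z] at hω
        exact congrArg (· ∈ U) hω.symm
  exact eventuallyConst_set.1 hconst

variable [IsProbabilityMeasure μ]

/- A function orthogonal to all coboundaries is invariant, hence constant by ergodicity, hence lies
in the subspace it is orthogonal to. -/
lemma boxErgodicSubmodule_eq_top : boxErgodicSubmodule d μ = ⊤ := by
  have : CompleteSpace (boxErgodicSubmodule d μ) := isClosed_boxErgodicSubmodule.completeSpace_coe
  rw [← Submodule.orthogonal_eq_bot_iff, Submodule.eq_bot_iff]
  intro x hx
  have hinv (z : Zd d) : koopman μ z x = x := by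
    refine eq_of_norm_le_re_inner_eq_norm_sq (𝕜 := ℝ) ((koopman μ z).norm_map x).le ?_
    have horth := hx _ (sub_koopman_mem_boxErgodicSubmodule z x)
    rw [inner_sub_left, real_inner_self_eq_norm_sq, sub_eq_zero] at horth
    exact horth.symm
  obtain ⟨c, hc⟩ := exists_ae_eq_const_of_forall_koopman_eq hinv
  have hmem : x ∈ boxErgodicSubmodule d μ := (boxErgodic_const d c).congr_ae hc.symm
  exact inner_self_eq_zero.1 (hx x hmem)

lemma boxErgodic_of_integrable {f : Ω → ℝ} (hf : Integrable f μ) :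
    BoxErgodic d μ f := by
  obtain ⟨g, hg, hfg⟩ := hf.aestronglyMeasurable
  have hgi : Integrable g μ := hf.congr hfg
  have hsimple (s : SimpleFunc Ω ℝ) : BoxErgodic d μ s := by
    rw [← toLp_mem_boxErgodicSubmodule (s.memLp_of_isFiniteMeasure 2 μ),
      boxErgodicSubmodule_eq_top]
    exact Submodule.mem_top
  exact (BoxErgodic.of_tendsto_lintegral (fun k => hsimple _)
    (SimpleFunc.integrable_approxOn_range hg.measurable hgi) hgi
    (SimpleFunc.tendsto_approxOn_range_L1_enorm hg.measurable hgi)).congr_ae hfg.symm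

end ErgodicAction

section Coercivity

lemma sum_mul_rpow_le_rpow_sum_mul_rpow_sum {ι : Type*} (s : Finset ι) {w l D : ι → ℝ} {p β : ℝ}
    (hβ : 0 < β) (hw : ∀ i, 0 ≤ w i) (hl : ∀ i, 0 < l i) (hD : ∀ i, 0 ≤ D i) :
    ∑ i ∈ s, w i * D i ^ (p * β / (β + 1)) ≤
      (∑ i ∈ s, w i * (l i * D i ^ p)) ^ (β / (β + 1)) *
        (∑ i ∈ s, w i * l i ^ (-β)) ^ (1 / (β + 1)) := by
  have hle : 1 ≤ (β + 1) / β := (one_le_div hβ).2 (le_add_of_nonneg_right zero_le_one)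
  have hmul (i : ι) : w i * l i ^ (-β) * (l i ^ β * D i ^ (p * β / (β + 1))) =
      w i * D i ^ (p * β / (β + 1)) := by
    rw [mul_assoc, ← mul_assoc (l i ^ (-β)), ← Real.rpow_add (hl i), neg_add_cancel,
      Real.rpow_zero, one_mul]
  have hpow (i : ι) : w i * l i ^ (-β) * (l i ^ β * D i ^ (p * β / (β + 1))) ^ ((β + 1) / β) =
      w i * (l i * D i ^ p) := by
    rw [Real.mul_rpow (Real.rpow_nonneg (hl i).le _) (Real.rpow_nonneg (hD i) _),
      ← Real.rpow_mul (hl i).le, ← Real.rpow_mul (hD i), mul_assoc, ← mul_assoc (l i ^ (-β)),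
      ← Real.rpow_add (hl i)]
    congr 3
    · rw [show -β + β * ((β + 1) / β) = 1 by field_simp; ring, Real.rpow_one]
    · field_simp
  have hholder := Real.inner_le_weight_mul_Lp_of_nonneg s hle
    (fun i => w i * l i ^ (-β)) (fun i => l i ^ β * D i ^ (p * β / (β + 1)))
    (fun i => mul_nonneg (hw i) (Real.rpow_nonneg (hl i).le _))
    fun i => mul_nonneg (Real.rpow_nonneg (hl i).le _) (Real.rpow_nonneg (hD i) _)
  have hexp : 1 - β / (β + 1) = 1 / (β + 1) := by field_simp; ring
  simpa only [hmul, hpow, inv_div, hexp, mul_comm] using hholder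

lemma limsup_le_of_tendsto_of_eventually_le {ι : Type*} {l : Filter ι} [l.NeBot] {E F : ι → ℝ}
    {Φ : ℝ → ι → ℝ} {φ : ℝ → ℝ} (hE : IsBoundedUnder (· ≤ ·) l E)
    (hF : IsCoboundedUnder (· ≤ ·) l F) (hΦ : ∀ e, Tendsto (Φ e) l (𝓝 (φ e)))
    (hφ : ContinuousWithinAt φ (Ioi (limsup E l)) (limsup E l))
    (h : ∀ e, ∀ᶠ t in l, E t ≤ e → F t ≤ Φ e t) :
    IsBoundedUnder (· ≤ ·) l F ∧ limsup F l ≤ φ (limsup E l) := by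
  have hFΦ {e : ℝ} (he : limsup E l < e) : F ≤ᶠ[l] Φ e := by
    filter_upwards [eventually_lt_of_limsup_lt he hE, h e] with t hEt ht
    exact ht hEt.le
  refine ⟨(hΦ _).isBoundedUnder_le.mono_le (hFΦ (lt_add_one _)), ge_of_tendsto hφ ?_⟩
  filter_upwards [self_mem_nhdsWithin] with e he
  exact (limsup_le_limsup (hFΦ he) hF (hΦ e).isBoundedUnder_le).trans_eq (hΦ e).limsup_eq

/-- The difference quotient `∂_b^ε u`, with the identification of functions on `εℤ^d` and on `ℤ^d`
used in `energyE`. -/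
def diffQuot (ε : ℝ) (b : Zd d) (u : Zd d → Rn n) (z : Zd d) : Rn n :=
  (ε * ‖toRd b‖)⁻¹ • (u (z + b) - u z)

/-- The scaled nearest-neighbour gradient energy `ε^d ∑_{z ∈ εℤ^d ∩ A} ∑_{b ∈ 𝒩₀} |∂_b^ε u(z)|^q`
of exponent `q`. -/
def gradientEnergy (q ε : ℝ) (u : Zd d → Rn n) (A : Set (Rd d)) : ℝ :=
  ε ^ d * ∑' z : Zd d, if ε • toRd z ∈ A then ∑ i, ‖diffQuot ε (stdb i) u z‖ ^ q else 0

lemma gradientEnergy_halfBox (q : ℝ) {ε : ℝ} (hε : 0 < ε) (u : Zd d → Rn n) (a b : Fin d → ℝ) :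
    gradientEnergy q ε u (halfBox a b) =
      riemannSum a b ε fun z => ∑ i, ‖diffQuot ε (stdb i) u z‖ ^ q :=
  pow_mul_tsum_halfBox_eq_riemannSum a b hε _

lemma gradientEnergy_halfBox_nonneg (q : ℝ) {ε : ℝ} (hε : 0 < ε) (u : Zd d → Rn n)
    (a b : Fin d → ℝ) : 0 ≤ gradientEnergy q ε u (halfBox a b) := by
  rw [gradientEnergy_halfBox q hε, ← map_zero (riemannSum a b ε)]
  exact riemannSum_mono a b hε.le fun z => Finset.sum_nonneg fun i _ => by positivity

lemma gradientEnergy_halfBox_le {a b : Fin d → ℝ} {ε p β : ℝ} (hε : 0 < ε) (hβ : 0 < β)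
    {l : Fin d → Zd d → ℝ} (hl : ∀ i z, 0 < l i z) (u : Zd d → Rn n) :
    gradientEnergy (p * β / (β + 1)) ε u (halfBox a b) ≤
      (riemannSum a b ε fun z => ∑ i, l i z * ‖diffQuot ε (stdb i) u z‖ ^ p) ^ (β / (β + 1)) *
        (riemannSum a b ε fun z => ∑ i, l i z ^ (-β)) ^ (1 / (β + 1)) := by
  rw [gradientEnergy_halfBox _ hε]
  simp only [riemannSum_apply, Finset.mul_sum, ← Finset.sum_product']
  exact sum_mul_rpow_le_rpow_sum_mul_rpow_sum _ hβ (fun _ => by positivity)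
    (fun x => hl x.2 x.1) fun _ => norm_nonneg _

lemma stdb_injective : Function.Injective (stdb : Fin d → Zd d) := fun i j h => by
  simpa only [stdb, if_true, left_eq_ite_iff, one_ne_zero, imp_false, not_not] using congrFun h i

lemma sum_stdb_le_sum {E0 : Finset (Zd d)} (hE0 : ∀ i, stdb i ∈ E0) {F : Zd d → ℝ}
    (hF : ∀ b ∈ E0, 0 ≤ F b) : ∑ i, F (stdb i) ≤ ∑ b ∈ E0, F b := by
  rw [← Finset.sum_image (s := Finset.univ) stdb_injective.injOn]
  refine Finset.sum_le_sum_of_subset_of_nonneg ?_ fun b hb _ => hF b hb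
  exact Finset.image_subset_iff.2 fun i _ => hE0 i

section Deterministic

variable {X : Type*} {τ : Zd d → X → X} {E0 : Finset (Zd d)} {V : Zd d → X → Rn n → ℝ}
  {ω : X} {p c : ℝ} {l : Fin d → Zd d → ℝ}

lemma riemannSum_mul_diffQuot_le (hE0 : ∀ i, stdb i ∈ E0) (hc : 0 < c)
    (hVnn : ∀ b ∈ E0, ∀ z r, 0 ≤ V b (τ z ω) r)
    (hV : ∀ i z r, l i z * (‖r‖ ^ p / c - c) ≤ V (stdb i) (τ z ω) r) (a b : Fin d → ℝ) {ε : ℝ}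
    (hε : 0 < ε) (u : Zd d → Rn n) :
    (riemannSum a b ε fun z => ∑ i, l i z * ‖diffQuot ε (stdb i) u z‖ ^ p) ≤
      c * energyE τ E0 V ε ω u (halfBox a b) + c ^ 2 * riemannSum a b ε fun z => ∑ i, l i z := by
  have henergy : energyE τ E0 V ε ω u (halfBox a b) =
      riemannSum a b ε fun z => ∑ b ∈ E0, V b (τ z ω) (diffQuot ε b u z) :=
    pow_mul_tsum_halfBox_eq_riemannSum a b hε _
  rw [henergy, ← smul_eq_mul, ← smul_eq_mul, ← map_smul, ← map_smul, ← map_add]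
  refine riemannSum_mono a b hε.le fun z => ?_
  have hgrowth (i : Fin d) : l i z * ‖diffQuot ε (stdb i) u z‖ ^ p ≤
      c * V (stdb i) (τ z ω) (diffQuot ε (stdb i) u z) + c ^ 2 * l i z := by
    calc l i z * ‖diffQuot ε (stdb i) u z‖ ^ p
        = c * (l i z * (‖diffQuot ε (stdb i) u z‖ ^ p / c - c)) + c ^ 2 * l i z := by
          field_simp; ring
      _ ≤ _ := by gcongr; exact hV i z _
  calc ∑ i, l i z * ‖diffQuot ε (stdb i) u z‖ ^ p
      ≤ ∑ i, (c * V (stdb i) (τ z ω) (diffQuot ε (stdb i) u z) + c ^ 2 * l i z) :=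
        Finset.sum_le_sum fun i _ => hgrowth i
    _ = c * ∑ i, V (stdb i) (τ z ω) (diffQuot ε (stdb i) u z) + c ^ 2 * ∑ i, l i z := by
        rw [Finset.sum_add_distrib, Finset.mul_sum, Finset.mul_sum]
    _ ≤ c * ∑ b ∈ E0, V b (τ z ω) (diffQuot ε b u z) + c ^ 2 * ∑ i, l i z := by
        gcongr
        exact sum_stdb_le_sum hE0 (F := fun b => V b (τ z ω) (diffQuot ε b u z))
          fun b hb => hVnn b hb z _

lemma limsup_gradientEnergy_le_of_tendsto_riemannSum (hE0 : ∀ i, stdb i ∈ E0) (hc : 0 < c)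
    (hVnn : ∀ b ∈ E0, ∀ z r, 0 ≤ V b (τ z ω) r)
    (hV : ∀ i z r, l i z * (‖r‖ ^ p / c - c) ≤ V (stdb i) (τ z ω) r) {β : ℝ} (hβ : 0 < β)
    (hl : ∀ i z, 0 < l i z) {a b : Fin d → ℝ} {L M : ℝ}
    (hL : Tendsto (fun ε => riemannSum a b ε fun z => ∑ i, l i z) (𝓝[>] (0 : ℝ)) (𝓝 L))
    (hM : Tendsto (fun ε => riemannSum a b ε fun z => ∑ i, l i z ^ (-β)) (𝓝[>] (0 : ℝ)) (𝓝 M))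
    {u : ℝ → Zd d → Rn n}
    (hu : IsBoundedUnder (· ≤ ·) (𝓝[>] (0 : ℝ)) fun ε => energyE τ E0 V ε ω (u ε) (halfBox a b)) :
    IsBoundedUnder (· ≤ ·) (𝓝[>] (0 : ℝ))
        (fun ε => gradientEnergy (p * β / (β + 1)) ε (u ε) (halfBox a b)) ∧
      limsup (fun ε => gradientEnergy (p * β / (β + 1)) ε (u ε) (halfBox a b)) (𝓝[>] (0 : ℝ)) ≤
        (c * limsup (fun ε => energyE τ E0 V ε ω (u ε) (halfBox a b)) (𝓝[>] (0 : ℝ)) + c ^ 2 * L) ^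
          (β / (β + 1)) * M ^ (1 / (β + 1)) := by
  have hθ : 0 ≤ β / (β + 1) := by positivity
  refine limsup_le_of_tendsto_of_eventually_le hu
    (Φ := fun e ε => (c * e + c ^ 2 * riemannSum a b ε fun z => ∑ i, l i z) ^ (β / (β + 1)) *
      (riemannSum a b ε fun z => ∑ i, l i z ^ (-β)) ^ (1 / (β + 1)))
    (φ := fun e => (c * e + c ^ 2 * L) ^ (β / (β + 1)) * M ^ (1 / (β + 1))) ?_ (fun e => ?_) ?_
    fun e => ?_
  · refine (isBoundedUnder_of_eventually_ge (a := 0) ?_).isCoboundedUnder_le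
    filter_upwards [self_mem_nhdsWithin] with ε hε
    exact gradientEnergy_halfBox_nonneg _ hε _ a b
  · exact ((tendsto_const_nhds.add (hL.const_mul _)).rpow_const (.inr hθ)).mul
      (hM.rpow_const (.inr (by positivity)))
  · exact ((((continuous_const_mul c).add continuous_const).rpow_const fun _ => .inr hθ).mul
      continuous_const).continuousWithinAt
  · filter_upwards [self_mem_nhdsWithin] with ε (hε : 0 < ε) he
    have hnonneg {F : Zd d → ℝ} (hF : 0 ≤ F) : 0 ≤ riemannSum a b ε F :=
      map_zero (riemannSum a b ε) ▸ riemannSum_mono a b hε.le hF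
    have hM0 : 0 ≤ riemannSum a b ε fun z => ∑ i, l i z ^ (-β) :=
      hnonneg fun z => Finset.sum_nonneg fun i _ => Real.rpow_nonneg (hl i z).le _
    have hX0 : 0 ≤ riemannSum a b ε fun z => ∑ i, l i z * ‖diffQuot ε (stdb i) (u ε) z‖ ^ p :=
      hnonneg fun z => Finset.sum_nonneg fun i _ => mul_nonneg (hl i z).le (by positivity)
    refine (gradientEnergy_halfBox_le hε hβ hl (u ε)).trans ?_
    gcongr
    refine (riemannSum_mul_diffQuot_le hE0 hc hVnn hV a b hε (u ε)).trans ?_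
    gcongr

end Deterministic

end Coercivity

section Moments

variable {μ : Measure Ω} {f : Ω → ℝ} {β : ℝ}

lemma ae_pos_of_lintegral_ofReal_rpow_neg_ne_top (hf : AEMeasurable f μ) (hβ : 0 < β)
    (h : ∫⁻ ω, ENNReal.ofReal (f ω) ^ (-β) ∂μ ≠ ⊤) : ∀ᵐ ω ∂μ, 0 < f ω := by
  filter_upwards [ae_lt_top' (hf.ennreal_ofReal.pow_const _) h] with ω hω
  by_contra! hle
  rw [ENNReal.ofReal_of_nonpos hle, ENNReal.zero_rpow_of_neg (neg_neg_of_pos hβ)] at hω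
  exact hω.ne rfl

lemma ae_toReal_ofReal_rpow_neg_eq (hf : AEMeasurable f μ) (hβ : 0 < β)
    (h : ∫⁻ ω, ENNReal.ofReal (f ω) ^ (-β) ∂μ ≠ ⊤) :
    (fun ω => (ENNReal.ofReal (f ω) ^ (-β)).toReal) =ᵐ[μ] fun ω => f ω ^ (-β) := by
  filter_upwards [ae_pos_of_lintegral_ofReal_rpow_neg_ne_top hf hβ h] with ω hω
  rw [← ENNReal.toReal_rpow, ENNReal.toReal_ofReal hω.le]

lemma integrable_rpow_neg_of_lintegral_ne_top (hf : AEMeasurable f μ) (hβ : 0 < β)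
    (h : ∫⁻ ω, ENNReal.ofReal (f ω) ^ (-β) ∂μ ≠ ⊤) : Integrable (fun ω => f ω ^ (-β)) μ :=
  (integrable_toReal_of_lintegral_ne_top (hf.ennreal_ofReal.pow_const _) h).congr
    (ae_toReal_ofReal_rpow_neg_eq hf hβ h)

lemma integral_rpow_neg_eq_toReal_lintegral (hf : AEMeasurable f μ) (hβ : 0 < β)
    (h : ∫⁻ ω, ENNReal.ofReal (f ω) ^ (-β) ∂μ ≠ ⊤) :
    ∫ ω, f ω ^ (-β) ∂μ = (∫⁻ ω, ENNReal.ofReal (f ω) ^ (-β) ∂μ).toReal := by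
  have hmeas := hf.ennreal_ofReal.pow_const (-β)
  rw [← integral_congr_ae (ae_toReal_ofReal_rpow_neg_eq hf hβ h),
    integral_toReal hmeas (ae_lt_top' hmeas h)]

lemma integrable_of_lintegral_ofReal_rpow_lt_top [IsFiniteMeasure μ] (hf : AEMeasurable f μ)
    (hf0 : ∀ ω, 0 ≤ f ω) {α : ℝ} (hα : 1 ≤ α)
    (h : ∫⁻ ω, ENNReal.ofReal (f ω ^ α) ∂μ < ⊤) : Integrable f μ := by
  have hpow : Integrable (fun ω => f ω ^ α) μ :=
    (lintegral_ofReal_ne_top_iff_integrable (hf.pow_const α).aestronglyMeasurable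
      (ae_of_all _ fun ω => Real.rpow_nonneg (hf0 ω) α)).1 h.ne
  refine ((integrable_const (1 : ℝ)).add hpow).mono' hf.aestronglyMeasurable
    (ae_of_all _ fun ω => ?_)
  rw [Real.norm_of_nonneg (hf0 ω), Pi.add_apply]
  rcases le_total (f ω) 1 with h1 | h1
  · exact h1.trans (le_add_of_nonneg_right (Real.rpow_nonneg (hf0 ω) α))
  · exact (Real.self_le_rpow_of_one_le h1 hα).trans (le_add_of_nonneg_left zero_le_one)

end Moments

lemma ae_limsup_gradientEnergy_le [AddAction (Zd d) Ω] [MeasurableConstVAdd (Zd d) Ω]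
    {μ : Measure Ω} [IsProbabilityMeasure μ] [ErgodicVAdd (Zd d) Ω μ]
    {E0 : Finset (Zd d)} (hE0 : ∀ i, stdb i ∈ E0) {p c β : ℝ} (hc : 0 < c) (hβ : 0 < β)
    {V : Zd d → Ω → Rn n → ℝ} (hVnn : ∀ b ∈ E0, ∀ ω r, 0 ≤ V b ω r)
    {l : Fin d → Ω → ℝ} (hV : ∀ i ω r, l i ω * (‖r‖ ^ p / c - c) ≤ V (stdb i) ω r)
    (hl : ∀ i, Integrable (l i) μ) (hlβ : ∀ i, ∫⁻ ω, ENNReal.ofReal (l i ω) ^ (-β) ∂μ ≠ ⊤) :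
    ∀ᵐ ω ∂μ, ∀ (a b : Fin d → ℝ) (u : ℝ → Zd d → Rn n),
      IsBoundedUnder (· ≤ ·) (𝓝[>] (0 : ℝ))
        (fun ε => energyE (· +ᵥ ·) E0 V ε ω (u ε) (halfBox a b)) →
      IsBoundedUnder (· ≤ ·) (𝓝[>] (0 : ℝ))
        (fun ε => gradientEnergy (p * β / (β + 1)) ε (u ε) (halfBox a b)) ∧
      limsup (fun ε => gradientEnergy (p * β / (β + 1)) ε (u ε) (halfBox a b)) (𝓝[>] (0 : ℝ)) ≤
        (c * limsup (fun ε => energyE (· +ᵥ ·) E0 V ε ω (u ε) (halfBox a b)) (𝓝[>] (0 : ℝ)) +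
            c ^ 2 * volume.real (halfBox a b) * ∑ i, ∫ ω', l i ω' ∂μ) ^ (β / (β + 1)) *
          (volume.real (halfBox a b) *
            ∑ i, (∫⁻ ω', ENNReal.ofReal (l i ω') ^ (-β) ∂μ).toReal) ^ (1 / (β + 1)) := by
  have hlm (i : Fin d) : AEMeasurable (l i) μ := (hl i).aemeasurable
  have hlβi (i : Fin d) : Integrable (fun ω => l i ω ^ (-β)) μ :=
    integrable_rpow_neg_of_lintegral_ne_top (hlm i) hβ (hlβ i)
  have hpos : ∀ᵐ ω ∂μ, ∀ (i : Fin d) (z : Zd d), (0 : ℝ) < l i (z +ᵥ ω) :=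
    ae_all_iff.2 fun i => ae_all_iff.2 fun z =>
      (measurePreserving_vadd z μ).quasiMeasurePreserving.ae
        (ae_pos_of_lintegral_ofReal_rpow_neg_ne_top (hlm i) hβ (hlβ i))
  filter_upwards [hpos,
    boxErgodic_of_integrable (d := d) (integrable_finsetSum Finset.univ fun i _ => hl i),
    boxErgodic_of_integrable (d := d) (integrable_finsetSum Finset.univ fun i _ => hlβi i)]
    with ω hω hL hM a b u hu
  have hbound := limsup_gradientEnergy_le_of_tendsto_riemannSum hE0 hc
    (fun b hb z => hVnn b hb (z +ᵥ ω)) (fun i z => hV i (z +ᵥ ω)) hβ hω (hL a b) (hM a b) hu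
  simpa only [integral_finsetSum _ fun i _ => hl i, integral_finsetSum _ fun i _ => hlβi i,
    integral_rpow_neg_eq_toReal_lintegral (hlm _) hβ (hlβ _), ← mul_assoc] using hbound

section Shifts

variable {G X : Type*} [AddGroup G]

/-- The additive action `z +ᵥ ω = τ z ω` of a group on a space given by a family of shifts `τ`. -/
abbrev shiftAddAction (τ : G → X → X) (hτ0 : τ 0 = id) (hτadd : ∀ x y, τ (x + y) = τ x ∘ τ y) :
    AddAction G X where
  vadd := τ
  zero_vadd := congrFun hτ0
  add_vadd x y := congrFun (hτadd x y)

lemma eventuallyConst_of_forall_preimage_vadd_ae_eq [AddAction G Ω] [Countable G]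
    [MeasurableConstVAdd G Ω] {μ : Measure Ω} [IsProbabilityMeasure μ]
    (herg : ∀ B : Set Ω, MeasurableSet B → (∀ z : G, (z +ᵥ ·) ⁻¹' B = B) → μ B = 0 ∨ μ B = 1)
    {s : Set Ω} (hs : MeasurableSet s) (hinv : ∀ z : G, (z +ᵥ ·) ⁻¹' s =ᵐ[μ] s) :
    EventuallyConst s (ae μ) := by
  set B : Set Ω := ⋂ z : G, (z +ᵥ ·) ⁻¹' s
  have hB : MeasurableSet B := MeasurableSet.iInter fun z => measurable_const_vadd z hs
  have hBinv (z : G) : (z +ᵥ ·) ⁻¹' B = B := by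
    simp only [B, preimage_iInter, preimage_preimage, vadd_vadd]
    exact (Equiv.addRight z).surjective.iInter_comp fun y => (y +ᵥ ·) ⁻¹' s
  have hBs : B =ᵐ[μ] s := by
    simpa only [iInter_const] using Filter.EventuallyEq.countable_iInter hinv
  refine eventuallyConst_set'.2 ((herg B hB hBinv).imp (fun h => ?_) fun h => ?_)
  · exact hBs.symm.trans (ae_eq_empty.2 h)
  · exact hBs.symm.trans (eventuallyEq_univ.2 ((mem_ae_iff_prob_eq_one hB).2 h))

end Shifts

theorem coercivity_estimate_general {P : Measure Ω} [IsProbabilityMeasure P]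
    {τ : Zd d → Ω → Ω} (hτ0 : τ 0 = id) (hτadd : ∀ x y : Zd d, τ (x + y) = τ x ∘ τ y)
    (hτmp : ∀ z : Zd d, MeasurePreserving (τ z) P P)
    (hτerg : ∀ B : Set Ω, MeasurableSet B → (∀ z : Zd d, τ z ⁻¹' B = B) → P B = 0 ∨ P B = 1)
    {E0 : Finset (Zd d)} (hE0 : ∀ i, stdb i ∈ E0) {p c β : ℝ} (hc : 0 < c) (hβ : 0 < β)
    {V : Zd d → Ω → Rn n → ℝ} (hVnn : ∀ b ∈ E0, ∀ ω r, 0 ≤ V b ω r)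
    {l : Fin d → Ω → ℝ} (hV : ∀ i ω r, l i ω * (‖r‖ ^ p / c - c) ≤ V (stdb i) ω r)
    (hl : ∀ i, Integrable (l i) P) (hlβ : ∀ i, ∫⁻ ω, ENNReal.ofReal (l i ω) ^ (-β) ∂P ≠ ⊤) :
    ∃ Ω₀ : Set Ω, MeasurableSet Ω₀ ∧ P Ω₀ = 1 ∧
      ∀ ω ∈ Ω₀, ∀ (a b : Fin d → ℝ) (u : ℝ → Zd d → Rn n),
        IsBoundedUnder (· ≤ ·) (𝓝[>] (0 : ℝ))
          (fun ε => energyE τ E0 V ε ω (u ε) (halfBox a b)) →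
        IsBoundedUnder (· ≤ ·) (𝓝[>] (0 : ℝ))
          (fun ε => gradientEnergy (p * β / (β + 1)) ε (u ε) (halfBox a b)) ∧
        limsup (fun ε => gradientEnergy (p * β / (β + 1)) ε (u ε) (halfBox a b)) (𝓝[>] (0 : ℝ)) ≤
          (c * limsup (fun ε => energyE τ E0 V ε ω (u ε) (halfBox a b)) (𝓝[>] (0 : ℝ)) +
              c ^ 2 * volume.real (halfBox a b) * ∑ i, ∫ ω', l i ω' ∂P) ^ (β / (β + 1)) *
            (volume.real (halfBox a b) *
              ∑ i, (∫⁻ ω', ENNReal.ofReal (l i ω') ^ (-β) ∂P).toReal) ^ (1 / (β + 1)) := by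
  let := shiftAddAction τ hτ0 hτadd
  have : MeasurableConstVAdd (Zd d) Ω := ⟨fun z => (hτmp z).measurable⟩
  have : ErgodicVAdd (Zd d) Ω P :=
    { measure_preimage_vadd := fun z _ hs => (hτmp z).measure_preimage hs.nullMeasurableSet
      aeconst_of_forall_preimage_vadd_ae_eq :=
        eventuallyConst_of_forall_preimage_vadd_ae_eq hτerg }
  obtain ⟨Ω₀, hΩ₀, hmeas, h⟩ :=
    (ae_limsup_gradientEnergy_le hE0 hc hβ hVnn hV hl hlβ).exists_measurable_mem
  exact ⟨Ω₀, hmeas, (mem_ae_iff_prob_eq_one hmeas).1 hΩ₀, h⟩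

/-- discrete coercivity estimate, Step 1 of the proof of Lemma 3.6. -/
theorem coercivity_estimate
    {d n : ℕ} (hd : 2 ≤ d) (hn : 1 ≤ n)
    {Ω : Type*} [MeasurableSpace Ω] (P : Measure Ω) [IsProbabilityMeasure P]
    (τ : Zd d → Ω → Ω) (hτ0 : τ 0 = id)
    (hτadd : ∀ x y : Zd d, τ (x + y) = τ x ∘ τ y)
    (hτmp : ∀ z : Zd d, MeasurePreserving (τ z) P P)
    (hτerg : ∀ B : Set Ω, MeasurableSet B → (∀ z : Zd d, τ z ⁻¹' B = B) → P B = 0 ∨ P B = 1)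
    (E0 : Finset (Zd d)) (hE00 : (0 : Zd d) ∉ E0) (hE0b : ∀ i : Fin d, stdb i ∈ E0)
    (p c₁ : ℝ) (hp : 1 < p) (hc₁ : 0 < c₁)
    (V : Zd d → Ω → Rn n → ℝ)
    (hVmeas : ∀ b ∈ E0, Measurable fun q : Ω × Rn n => V b q.1 q.2)
    (hVcont : ∀ b ∈ E0, ∀ ω : Ω, Continuous (V b ω))
    (hVnn : ∀ b ∈ E0, ∀ (ω : Ω) (r : Rn n), 0 ≤ V b ω r)
    (lam : Zd d → Ω → ℝ)
    (hlammeas : ∀ b ∈ E0, Measurable (lam b))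
    (hlamnn : ∀ b ∈ E0, ∀ ω : Ω, 0 ≤ lam b ω)
    (hgrowth : ∀ b ∈ E0, ∀ (ω : Ω) (r : Rn n),
      lam b ω * (‖r‖ ^ p / c₁ - c₁) ≤ V b ω r ∧ V b ω r ≤ c₁ * (1 + lam b ω * (‖r‖ ^ p + 1)))
    (α β : ℝ) (hα : 1 ≤ α) (hβ : 1 / (p - 1) ≤ β)
    (hmomα : ∀ b ∈ E0, ∫⁻ ω, ENNReal.ofReal (lam b ω ^ α) ∂P < ⊤)
    (hmomβ : ∀ i : Fin d, ∫⁻ ω, ENNReal.ofReal (lam (stdb i) ω) ^ (-β) ∂P < ⊤)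
    : ∃ Ω₀ : Set Ω, MeasurableSet Ω₀ ∧ P Ω₀ = 1 ∧
      ∀ ω ∈ Ω₀, ∀ a b : Fin d → ℝ, ∀ uε : ℝ → Zd d → Rn n,
        IsBoundedUnder (· ≤ ·) (𝓝[>] (0 : ℝ))
          (fun ε => energyE τ E0 V ε ω (uε ε) (halfBox a b)) →
        (IsBoundedUnder (· ≤ ·) (𝓝[>] (0 : ℝ)) (fun ε : ℝ => ε ^ d * ∑' z : Zd d,
            if ε • toRd z ∈ halfBox a b then
              ∑ i : Fin d,
                ‖(ε * ‖toRd (stdb i)‖)⁻¹ • (uε ε (z + stdb i) - uε ε z)‖ ^ (p * β / (β + 1))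
            else 0) ∧
          limsup (fun ε : ℝ => ε ^ d * ∑' z : Zd d,
              if ε • toRd z ∈ halfBox a b then
                ∑ i : Fin d,
                  ‖(ε * ‖toRd (stdb i)‖)⁻¹ • (uε ε (z + stdb i) - uε ε z)‖ ^ (p * β / (β + 1))
              else 0) (𝓝[>] (0 : ℝ)) ≤
            (c₁ * limsup (fun ε => energyE τ E0 V ε ω (uε ε) (halfBox a b)) (𝓝[>] (0 : ℝ)) +
                c₁ ^ 2 * (volume (halfBox a b)).toReal *
                  ∑ i : Fin d, ∫ ω', lam (stdb i) ω' ∂P) ^ (β / (β + 1)) *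
              ((volume (halfBox a b)).toReal *
                ∑ i : Fin d,
                  (∫⁻ ω', ENNReal.ofReal (lam (stdb i) ω') ^ (-β) ∂P).toReal) ^ (1 / (β + 1))) :=
  coercivity_estimate_general hτ0 hτadd hτmp hτerg hE0b hc₁
    ((one_div_pos.2 (sub_pos.2 hp)).trans_le hβ) hVnn
    (fun i ω r => (hgrowth _ (hE0b i) ω r).1)
    (fun i => integrable_of_lintegral_ofReal_rpow_lt_top (hlammeas _ (hE0b i)).aemeasurable
      (hlamnn _ (hE0b i)) hα (hmomα _ (hE0b i)))
    fun i => (hmomβ i).ne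

end StochHom
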